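/- Behaviour of β for the SSL prior outside the monotonicity interval: with λ_1 = 0.05, for n large enough there exist constants c, C > 0 such that: (i) (g_1/g_0)(2λ_1) < 0.25; (ii) β(x) < 0 for all x ∈ [0, 2λ_1]; (iii) β(x) ≥ c·n/log n for all √(2 log n) ≤ x ≤ λ_0/2; (iv) β(x) ≥ c·e^{Cn²}·γ_1(n)/n for all x ≥ λ_0/8. -/

import Mathlib

/-!
Statement 18: behaviour of β for the SSL prior outside the monotonicity
interval.
-/

open MeasureTheory Real Set

noncomputable section

/-- Standard normal density. -/
def phi (x : ℝ) : ℝ := Real.exp (-x ^ 2 / 2) / Real.sqrt (2 * Real.pi)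

/-- Spike inverse-scale `λ₀ = 5√(2π) n`. -/
def lam0 (n : ℕ) : ℝ := 5 * Real.sqrt (2 * Real.pi) * n

/-- Slab scale parameter `λ₁ = 0.05`. -/
def lam1 : ℝ := 0.05

/-- Spike density: Laplace with parameter `λ₀`. -/
def gamma0 (n : ℕ) (x : ℝ) : ℝ := lam0 n / 2 * Real.exp (-(lam0 n) * |x|)

/-- Slab density: Cauchy with scale `1/λ₁`. -/
def gamma1 (x : ℝ) : ℝ := lam1 / Real.pi * (1 + lam1 ^ 2 * x ^ 2)⁻¹

/-- `g₀ = φ * γ₀`. -/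
def g0 (n : ℕ) (x : ℝ) : ℝ := ∫ u, phi (x - u) * gamma0 n u

/-- `g₁ = φ * γ₁`. -/
def g1 (x : ℝ) : ℝ := ∫ u, phi (x - u) * gamma1 u

/-- `β(x) = g₁(x)/g₀(x) - 1` for the SSL prior. -/
def betaSSL (n : ℕ) (x : ℝ) : ℝ := g1 x / g0 n x - 1

/-!
The spike marginal `g₀` is small exactly where the claimed lower bounds are large. Completing the
square gives `g₀ x ≤ a / (a - |x|) * φ x` for a spike of rate `a > |x|`, which is at most
`exp (-x² / 2)` up to `x = a / 2`. Splitting the convolution at `|x - u| = x / 2` gives a bound of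
order `a * exp (-a x / 64)` beyond `a / 8`. Since the slab marginal `g₁ x` decays only like `x⁻²`,
the ratio is at least of order `exp (x² / 2) / (x² / 2)`, hence of order `n / log n`, in the first
range, and of order `exp (a² / 1024)` in the second. Near the origin `g₁` is at most the height
`λ₁ / π` of the slab, while the spike keeps a fixed mass there.
-/

open ProbabilityTheory Filter
open scoped NNReal

lemma div_log_le_exp_div {t y : ℝ} (hy : Real.exp 1 ≤ y) (ht : Real.log y ≤ t) :
    y / Real.log y ≤ Real.exp t / t := by
  have hy_pos : 0 < y := (Real.exp_pos 1).trans_le hy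
  have h_log : 1 ≤ Real.log y := (Real.le_log_iff_exp_le hy_pos).2 hy
  have hyt : y ≤ Real.exp t := (Real.log_le_iff_le_exp hy_pos).1 ht
  have h_anti := Real.log_div_self_antitoneOn hy (hy.trans hyt) hyt
  simp only [Real.log_exp] at h_anti
  rw [← inv_div, ← inv_div t]
  exact inv_anti₀ (div_pos (by linarith) (Real.exp_pos t)) h_anti

section StandardNormal

lemma two_le_sqrt_two_mul_pi : 2 ≤ √(2 * π) :=
  Real.le_sqrt_of_sq_le (by nlinarith [Real.pi_gt_three])

lemma phi_pos (x : ℝ) : 0 < phi x := by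
  unfold phi
  positivity

lemma phi_le_phi_of_abs_le {x y : ℝ} (h : |x| ≤ |y|) : phi y ≤ phi x := by
  have := sq_le_sq.2 h
  unfold phi
  gcongr

lemma two_mul_phi_le_exp (x : ℝ) : 2 * phi x ≤ Real.exp (-x ^ 2 / 2) := by
  rw [phi, ← mul_div_assoc, div_le_iff₀ (by positivity), mul_comm]
  gcongr
  exact two_le_sqrt_two_mul_pi

lemma phi_sub_le (x u : ℝ) : phi (x - u) ≤ phi x * Real.exp (|x| * |u|) := by
  rw [phi, phi, div_mul_eq_mul_div, ← Real.exp_add, ← abs_mul]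
  gcongr
  linarith [le_abs_self (x * u), sq_nonneg u]

lemma phi_one_gt : 0.19 < phi 1 := by
  have h_sqrt : √(2 * π) ≤ 2.6 :=
    (Real.sqrt_le_left (by norm_num)).2 (by linarith [Real.pi_lt_d2])
  have h_exp := Real.add_one_le_exp (-1 ^ 2 / 2 : ℝ)
  rw [phi, lt_div_iff₀ (by positivity)]
  linarith

lemma phi_sub_eq_gaussianPDFReal (x : ℝ) : (fun u => phi (x - u)) = gaussianPDFReal x 1 := by
  ext u
  simp only [phi, gaussianPDFReal, NNReal.coe_one, mul_one]
  rw [div_eq_inv_mul, ← neg_sub u x, neg_sq]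

lemma integrable_phi_sub (x : ℝ) : Integrable (fun u => phi (x - u)) :=
  phi_sub_eq_gaussianPDFReal x ▸ integrable_gaussianPDFReal x 1

lemma integral_phi_sub (x : ℝ) : ∫ u, phi (x - u) = 1 := by
  rw [phi_sub_eq_gaussianPDFReal, integral_gaussianPDFReal_eq_one x one_ne_zero]

end StandardNormal

/-- The convolution `φ * f` of `f` with the standard normal density: the marginal density at `x` of
a unit-variance normal observation whose mean has prior density `f`. -/
def gaussConv (f : ℝ → ℝ) (x : ℝ) : ℝ := ∫ u, phi (x - u) * f u

section GaussConv

variable {f : ℝ → ℝ}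

lemma integrable_phi_sub_mul (hf : Integrable f) (x : ℝ) :
    Integrable (fun u => phi (x - u) * f u) := by
  refine hf.bdd_mul (c := phi 0) (integrable_phi_sub x).aestronglyMeasurable
    (Eventually.of_forall fun u => ?_)
  rw [Real.norm_of_nonneg (phi_pos _).le]
  exact phi_le_phi_of_abs_le (by simp)

lemma gaussConv_pos (hf : Integrable f) (hf_pos : ∀ u, 0 < f u) (x : ℝ) : 0 < gaussConv f x := by
  have h_pos (u : ℝ) : 0 < phi (x - u) * f u := mul_pos (phi_pos _) (hf_pos u)
  have h_supp : Function.support (fun u => phi (x - u) * f u) = univ :=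
    eq_univ_of_forall fun u => (h_pos u).ne'
  rw [gaussConv, integral_pos_iff_support_of_nonneg (fun u => (h_pos u).le)
    (integrable_phi_sub_mul hf x), h_supp]
  simp

lemma gaussConv_le_of_forall_le {M : ℝ} (hf : Integrable f) (hM : ∀ u, f u ≤ M) (x : ℝ) :
    gaussConv f x ≤ M :=
  calc ∫ u, phi (x - u) * f u
      ≤ ∫ u, phi (x - u) * M :=
        integral_mono (integrable_phi_sub_mul hf x) ((integrable_phi_sub x).mul_const M)
          fun u => mul_le_mul_of_nonneg_left (hM u) (phi_pos _).le
    _ = M := by rw [integral_mul_const, integral_phi_sub, one_mul]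

lemma gaussConv_le_phi_mul_integral_add {x r M : ℝ} (hf : Integrable f) (hf_nonneg : ∀ u, 0 ≤ f u)
    (hr : 0 ≤ r) (hM : ∀ u, |x - u| ≤ r → f u ≤ M) :
    gaussConv f x ≤ phi r * (∫ u, f u) + M := by
  have hM_nonneg : 0 ≤ M := (hf_nonneg x).trans (hM x (by simpa using hr))
  have h_le (u : ℝ) : phi (x - u) * f u ≤ phi r * f u + phi (x - u) * M := by
    have h_near := mul_nonneg (phi_pos (x - u)).le hM_nonneg
    have h_far := mul_nonneg (phi_pos r).le (hf_nonneg u)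
    rcases le_total |x - u| r with hu | hu
    · linarith [mul_le_mul_of_nonneg_left (hM u hu) (phi_pos (x - u)).le]
    · have h_phi : phi (x - u) ≤ phi r := phi_le_phi_of_abs_le ((abs_of_nonneg hr).trans_le hu)
      linarith [mul_le_mul_of_nonneg_right h_phi (hf_nonneg u)]
  have h_int_phi := (integrable_phi_sub x).mul_const M
  calc ∫ u, phi (x - u) * f u
      ≤ ∫ u, (phi r * f u + phi (x - u) * M) :=
        integral_mono (integrable_phi_sub_mul hf x) ((hf.const_mul _).add h_int_phi) h_le
    _ = phi r * (∫ u, f u) + M := by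
        rw [integral_add (hf.const_mul _) h_int_phi, integral_const_mul, integral_mul_const,
          integral_phi_sub, one_mul]

lemma phi_mul_setIntegral_le_gaussConv {x r : ℝ} {s : Set ℝ} (hf : Integrable f)
    (hf_nonneg : ∀ u, 0 ≤ f u) (hs : MeasurableSet s) (hsr : ∀ u ∈ s, |x - u| ≤ r) :
    phi r * ∫ u in s, f u ≤ gaussConv f x := by
  have h_int := integrable_phi_sub_mul hf x
  calc phi r * ∫ u in s, f u = ∫ u in s, phi r * f u := (integral_const_mul _ _).symm
    _ ≤ ∫ u in s, phi (x - u) * f u :=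
        setIntegral_mono_on (hf.const_mul _).integrableOn h_int.integrableOn hs fun u hu =>
          mul_le_mul_of_nonneg_right
            (phi_le_phi_of_abs_le ((hsr u hu).trans (le_abs_self r))) (hf_nonneg u)
    _ ≤ ∫ u, phi (x - u) * f u :=
        setIntegral_le_integral h_int
          (Eventually.of_forall fun u => mul_nonneg (phi_pos _).le (hf_nonneg u))

lemma phi_mul_mul_le_gaussConv_of_antitoneOn {x r : ℝ} (hf : Integrable f)
    (hf_nonneg : ∀ u, 0 ≤ f u) (hf_anti : AntitoneOn f (Ici 0)) (hr : 0 ≤ r) (hrx : r ≤ x) :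
    phi r * (r * f x) ≤ gaussConv f x := by
  have h_const : r * f x ≤ ∫ u in Icc (x - r) x, f u :=
    calc r * f x = ∫ _u in Icc (x - r) x, f x := by simp [hr]
      _ ≤ ∫ u in Icc (x - r) x, f u :=
        setIntegral_mono_on (integrableOn_const (by simp)) hf.integrableOn measurableSet_Icc
          fun u hu => hf_anti (mem_Ici.2 (by linarith [hu.1])) (mem_Ici.2 (hr.trans hrx)) hu.2
  refine (mul_le_mul_of_nonneg_left h_const (phi_pos r).le).trans
    (phi_mul_setIntegral_le_gaussConv hf hf_nonneg measurableSet_Icc fun u hu => ?_)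
  rw [abs_of_nonneg (sub_nonneg.2 hu.2)]
  linarith [hu.1]

end GaussConv

/-- The density of the centred Laplace distribution with rate `a`, the spike prior. -/
def laplaceDensity (a x : ℝ) : ℝ := a / 2 * Real.exp (-a * |x|)

section Laplace

variable {a : ℝ}

lemma laplaceDensity_pos (ha : 0 < a) (x : ℝ) : 0 < laplaceDensity a x := by
  unfold laplaceDensity
  positivity

lemma laplaceDensity_le_of_abs_le (ha : 0 ≤ a) {x y : ℝ} (h : |x| ≤ |y|) :
    laplaceDensity a y ≤ laplaceDensity a x := by
  simp only [laplaceDensity, neg_mul]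
  gcongr

lemma integral_exp_neg_mul_abs (ha : 0 < a) : ∫ u : ℝ, Real.exp (-a * |u|) = 2 / a := by
  rw [integral_comp_abs (f := fun u => Real.exp (-a * u)), integral_exp_mul_Ioi (neg_lt_zero.2 ha),
    mul_zero, Real.exp_zero, neg_div_neg_eq, mul_one_div]

lemma integrable_exp_neg_mul_abs (ha : 0 < a) : Integrable (fun u : ℝ => Real.exp (-a * |u|)) :=
  Integrable.of_integral_ne_zero (integral_exp_neg_mul_abs ha ▸ by positivity)

lemma integrable_laplaceDensity (ha : 0 < a) : Integrable (laplaceDensity a) :=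
  (integrable_exp_neg_mul_abs ha).const_mul _

lemma integral_laplaceDensity (ha : 0 < a) : ∫ u, laplaceDensity a u = 1 := by
  simp only [laplaceDensity]
  rw [integral_const_mul, integral_exp_neg_mul_abs ha]
  field

lemma setIntegral_Ioc_laplaceDensity (ha : a ≠ 0) {r : ℝ} (hr : 0 ≤ r) :
    ∫ u in Ioc 0 r, laplaceDensity a u = (1 - Real.exp (-a * r)) / 2 := by
  have h_exp : ∫ u in 0..r, Real.exp (-a * u) = (1 - Real.exp (-a * r)) / a := by
    rw [intervalIntegral.integral_comp_mul_left _ (neg_ne_zero.2 ha), integral_exp, mul_zero,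
      Real.exp_zero, smul_eq_mul]
    field
  calc ∫ u in Ioc 0 r, laplaceDensity a u = ∫ u in Ioc 0 r, a / 2 * Real.exp (-a * u) :=
        setIntegral_congr_fun measurableSet_Ioc fun u hu => by
          simp only [laplaceDensity, abs_of_pos hu.1]
    _ = (1 - Real.exp (-a * r)) / 2 := by
        rw [integral_const_mul, ← intervalIntegral.integral_of_le hr, h_exp]
        field

lemma gaussConv_laplaceDensity_pos (ha : 0 < a) (x : ℝ) : 0 < gaussConv (laplaceDensity a) x :=
  gaussConv_pos (integrable_laplaceDensity ha) (laplaceDensity_pos ha) x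

lemma phi_mul_le_gaussConv_laplaceDensity (ha : 0 < a) {x r : ℝ} (hx : 0 ≤ x) (hxr : x ≤ r) :
    phi r * ((1 - Real.exp (-a * r)) / 2) ≤ gaussConv (laplaceDensity a) x := by
  rw [← setIntegral_Ioc_laplaceDensity ha.ne' (hx.trans hxr)]
  refine phi_mul_setIntegral_le_gaussConv (integrable_laplaceDensity ha)
    (fun u => (laplaceDensity_pos ha u).le) measurableSet_Ioc fun u hu => ?_
  exact abs_le.2 ⟨by linarith [hu.2], by linarith [hu.1]⟩

lemma gaussConv_laplaceDensity_le_mul_phi {x : ℝ} (hx : |x| < a) :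
    gaussConv (laplaceDensity a) x ≤ a / (a - |x|) * phi x := by
  have ha : 0 < a := (abs_nonneg x).trans_lt hx
  have hax : 0 < a - |x| := sub_pos.2 hx
  have h_le (u : ℝ) :
      phi (x - u) * laplaceDensity a u ≤ phi x * (a / 2) * Real.exp (-(a - |x|) * |u|) :=
    calc phi (x - u) * laplaceDensity a u
        ≤ phi x * Real.exp (|x| * |u|) * laplaceDensity a u :=
          mul_le_mul_of_nonneg_right (phi_sub_le x u) (laplaceDensity_pos ha u).le
      _ = phi x * (a / 2) * (Real.exp (|x| * |u|) * Real.exp (-a * |u|)) := by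
          rw [laplaceDensity]
          ring
      _ = phi x * (a / 2) * Real.exp (-(a - |x|) * |u|) := by
          rw [← Real.exp_add]
          ring_nf
  calc ∫ u, phi (x - u) * laplaceDensity a u
      ≤ ∫ u, phi x * (a / 2) * Real.exp (-(a - |x|) * |u|) :=
        integral_mono (integrable_phi_sub_mul (integrable_laplaceDensity ha) x)
          ((integrable_exp_neg_mul_abs hax).const_mul _) h_le
    _ = a / (a - |x|) * phi x := by
        rw [integral_const_mul, integral_exp_neg_mul_abs hax]
        field

lemma gaussConv_laplaceDensity_le_exp_neg_sq {x : ℝ} (ha : 0 < a) (hx : |x| ≤ a / 2) :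
    gaussConv (laplaceDensity a) x ≤ Real.exp (-x ^ 2 / 2) := by
  have hxa : |x| < a := by linarith
  have h_two : a / (a - |x|) ≤ 2 := by
    rw [div_le_iff₀ (sub_pos.2 hxa)]
    linarith
  calc gaussConv (laplaceDensity a) x ≤ a / (a - |x|) * phi x :=
        gaussConv_laplaceDensity_le_mul_phi hxa
    _ ≤ 2 * phi x := mul_le_mul_of_nonneg_right h_two (phi_pos x).le
    _ ≤ Real.exp (-x ^ 2 / 2) := two_mul_phi_le_exp x

lemma gaussConv_laplaceDensity_le_add (ha : 0 < a) {x : ℝ} (hx : 0 ≤ x) :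
    gaussConv (laplaceDensity a) x ≤ phi (x / 2) + laplaceDensity a (x / 2) := by
  have h := gaussConv_le_phi_mul_integral_add (x := x) (r := x / 2)
    (M := laplaceDensity a (x / 2)) (integrable_laplaceDensity ha)
    (fun u => (laplaceDensity_pos ha u).le) (by positivity)
    fun u hu => laplaceDensity_le_of_abs_le ha.le ?_
  · rwa [integral_laplaceDensity ha, mul_one] at h
  · rw [abs_of_nonneg (by positivity)]
    linarith [le_abs_self u, le_abs_self (x - u)]

lemma gaussConv_laplaceDensity_le_mul_exp_neg {x : ℝ} (ha : 0 < a) (hx : a / 8 ≤ x) :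
    gaussConv (laplaceDensity a) x ≤ (1 + a / 2) * Real.exp (-(a * x / 64)) := by
  have hx_pos : 0 < x := by linarith
  have h_phi : phi (x / 2) ≤ Real.exp (-(a * x / 64)) :=
    calc phi (x / 2) ≤ Real.exp (-(x / 2) ^ 2 / 2) := by
          linarith [two_mul_phi_le_exp (x / 2), phi_pos (x / 2)]
      _ ≤ Real.exp (-(a * x / 64)) := by
          gcongr
          nlinarith
  have h_laplace : laplaceDensity a (x / 2) ≤ a / 2 * Real.exp (-(a * x / 64)) := by
    rw [laplaceDensity, abs_of_pos (half_pos hx_pos)]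
    gcongr
    nlinarith [mul_pos ha hx_pos]
  calc gaussConv (laplaceDensity a) x ≤ phi (x / 2) + laplaceDensity a (x / 2) :=
        gaussConv_laplaceDensity_le_add ha hx_pos.le
    _ ≤ (1 + a / 2) * Real.exp (-(a * x / 64)) := by linarith

end Laplace

section Cauchy

variable (s : ℝ≥0)

lemma cauchyPDFReal_zero_nonneg (x : ℝ) : 0 ≤ cauchyPDFReal 0 s x := by
  rw [cauchyPDFReal_def]
  positivity

lemma cauchyPDFReal_zero_le_of_abs_le {x y : ℝ} (h : |x| ≤ |y|) :
    cauchyPDFReal 0 s y ≤ cauchyPDFReal 0 s x := by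
  have := sq_le_sq.2 h
  simp only [cauchyPDFReal_def', sub_zero, div_pow]
  gcongr

lemma cauchyPDFReal_zero_le (x : ℝ) : cauchyPDFReal 0 s x ≤ (π * s)⁻¹ :=
  calc cauchyPDFReal 0 s x ≤ cauchyPDFReal 0 s 0 := cauchyPDFReal_zero_le_of_abs_le s (by simp)
    _ = (π * s)⁻¹ := by simp [cauchyPDFReal_def', mul_comm]

lemma antitoneOn_cauchyPDFReal_zero : AntitoneOn (cauchyPDFReal 0 s) (Ici 0) :=
  fun _ hx _ _ hxy => cauchyPDFReal_zero_le_of_abs_le s (abs_le_abs_of_nonneg hx hxy)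

lemma cauchyPDFReal_zero_one_div_sq_le {x : ℝ} (hx : 1 ≤ x) :
    cauchyPDFReal 0 s 1 / x ^ 2 ≤ cauchyPDFReal 0 s x := by
  have h_sq : 1 ≤ x ^ 2 := one_le_pow₀ hx
  simp only [cauchyPDFReal_def, sub_zero, mul_div_assoc, inv_div_left]
  gcongr
  nlinarith [sq_nonneg (s : ℝ)]

/-- The constant `K` in the lower bound `K / x²` for the Gaussian smoothing of the centred Cauchy
density of scale `s`. -/
def cauchyTailConst : ℝ := phi 1 * cauchyPDFReal 0 s 1

variable {s}

lemma cauchyTailConst_pos (hs : s ≠ 0) : 0 < cauchyTailConst s :=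
  mul_pos (phi_pos 1) (cauchyPDF_pos 0 hs 1)

lemma cauchyTailConst_nonneg : 0 ≤ cauchyTailConst s :=
  mul_nonneg (phi_pos 1).le (cauchyPDFReal_zero_nonneg s 1)

lemma cauchyTailConst_div_sq_le_gaussConv {x : ℝ} (hx : 1 ≤ x) :
    cauchyTailConst s / x ^ 2 ≤ gaussConv (cauchyPDFReal 0 s) x :=
  calc cauchyTailConst s / x ^ 2 = phi 1 * (1 * (cauchyPDFReal 0 s 1 / x ^ 2)) := by
        rw [cauchyTailConst, one_mul, mul_div_assoc]
    _ ≤ phi 1 * (1 * cauchyPDFReal 0 s x) := by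
        gcongr
        exacts [(phi_pos 1).le, cauchyPDFReal_zero_one_div_sq_le s hx]
    _ ≤ gaussConv (cauchyPDFReal 0 s) x :=
        phi_mul_mul_le_gaussConv_of_antitoneOn (integrable_cauchyPDFReal 0)
          (cauchyPDFReal_zero_nonneg s) (antitoneOn_cauchyPDFReal_zero s) zero_le_one hx

end Cauchy

/-- The ratio of marginal densities `g₁ / g₀` for a Laplace spike of rate `a` and a Cauchy slab of
scale `s`. -/
def marginalRatio (a : ℝ) (s : ℝ≥0) (x : ℝ) : ℝ :=
  gaussConv (cauchyPDFReal 0 s) x / gaussConv (laplaceDensity a) x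

section MarginalRatio

variable {a : ℝ} {s : ℝ≥0} {x : ℝ}

lemma marginalRatio_lt_quarter (ha : 10 ≤ a) (hs : 20 ≤ s) (hx : x ∈ Icc (0 : ℝ) 1) :
    marginalRatio a s x < 0.25 := by
  have ha_pos : 0 < a := by linarith
  have h_slab : gaussConv (cauchyPDFReal 0 s) x ≤ 1 / 60 :=
    calc gaussConv (cauchyPDFReal 0 s) x ≤ (π * s)⁻¹ :=
          gaussConv_le_of_forall_le (integrable_cauchyPDFReal 0) (cauchyPDFReal_zero_le s) x
      _ ≤ (3 * 20)⁻¹ := by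
          gcongr
          exacts [Real.pi_gt_three.le, mod_cast hs]
      _ = 1 / 60 := by norm_num
  have h_exp : Real.exp (-a * 1) ≤ 1 / 10 := by
    rw [mul_one, Real.exp_neg, ← one_div]
    gcongr
    linarith [Real.add_one_le_exp a]
  have h_spike : 0.19 * ((1 - 1 / 10) / 2) ≤ gaussConv (laplaceDensity a) x :=
    calc (0.19 : ℝ) * ((1 - 1 / 10) / 2) ≤ phi 1 * ((1 - Real.exp (-a * 1)) / 2) :=
          mul_le_mul phi_one_gt.le (by linarith) (by norm_num) (phi_pos 1).le
      _ ≤ gaussConv (laplaceDensity a) x := phi_mul_le_gaussConv_laplaceDensity ha_pos hx.1 hx.2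
  rw [marginalRatio, div_lt_iff₀ (gaussConv_laplaceDensity_pos ha_pos x)]
  linarith

lemma cauchyTailConst_div_le_marginalRatio {B : ℝ} (ha : 0 < a) (hx : 1 ≤ x)
    (hB : gaussConv (laplaceDensity a) x ≤ B) :
    cauchyTailConst s / (x ^ 2 * B) ≤ marginalRatio a s x := by
  have h_slab := cauchyTailConst_div_sq_le_gaussConv (s := s) hx
  rw [← div_div, marginalRatio]
  have h_nonneg : 0 ≤ cauchyTailConst s / x ^ 2 := div_nonneg cauchyTailConst_nonneg (sq_nonneg x)
  exact div_le_div₀ (h_nonneg.trans h_slab) h_slab (gaussConv_laplaceDensity_pos ha x) hB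

lemma mul_div_log_le_marginalRatio {y : ℝ} (hy : Real.exp 1 ≤ y) (hyx : √(2 * Real.log y) ≤ x)
    (hxa : x ≤ a / 2) :
    cauchyTailConst s / 2 * (y / Real.log y) ≤ marginalRatio a s x := by
  have h_log : 1 ≤ Real.log y := (Real.le_log_iff_exp_le ((Real.exp_pos 1).trans_le hy)).2 hy
  have hx_nonneg : 0 ≤ x := (Real.sqrt_nonneg _).trans hyx
  have hx_sq : 2 * Real.log y ≤ x ^ 2 := (Real.sqrt_le_left hx_nonneg).1 hyx
  have hx : 1 ≤ x := by nlinarith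
  have ha : 0 < a := by linarith
  calc cauchyTailConst s / 2 * (y / Real.log y)
      ≤ cauchyTailConst s / 2 * (Real.exp (x ^ 2 / 2) / (x ^ 2 / 2)) := by
        have h_nonneg := cauchyTailConst_nonneg (s := s)
        gcongr ?_ * ?_
        exact div_log_le_exp_div hy (by linarith)
    _ = cauchyTailConst s / (x ^ 2 * Real.exp (-x ^ 2 / 2)) := by
        rw [neg_div, Real.exp_neg]
        field
    _ ≤ marginalRatio a s x :=
        cauchyTailConst_div_le_marginalRatio ha hx
          (gaussConv_laplaceDensity_le_exp_neg_sq ha ((abs_of_nonneg hx_nonneg).trans_le hxa))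

lemma mul_exp_sq_le_marginalRatio (ha : 640 ≤ a) (hx : a / 8 ≤ x) :
    cauchyTailConst s / 2 * Real.exp (a ^ 2 / 1024) ≤ marginalRatio a s x := by
  have hx_one : 1 ≤ x := by linarith
  have h_poly : x ^ 2 * (1 + a / 2) ≤ 2 * Real.exp (5 * x) :=
    calc x ^ 2 * (1 + a / 2) ≤ (2 * Real.exp x) * Real.exp (4 * x) := by
          gcongr
          · linarith [Real.quadratic_le_exp_of_nonneg (zero_le_one.trans hx_one)]
          · linarith [Real.add_one_le_exp (4 * x)]
      _ = 2 * Real.exp (5 * x) := by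
          rw [mul_assoc, ← Real.exp_add]
          ring_nf
  have h_denom : x ^ 2 * ((1 + a / 2) * Real.exp (-(a * x / 64))) ≤
      2 * Real.exp (-(a ^ 2 / 1024)) :=
    calc x ^ 2 * ((1 + a / 2) * Real.exp (-(a * x / 64)))
        ≤ 2 * Real.exp (5 * x) * Real.exp (-(a * x / 64)) := by
          rw [← mul_assoc]
          gcongr
      _ = 2 * Real.exp (5 * x - a * x / 64) := by
          rw [mul_assoc, ← Real.exp_add, ← sub_eq_add_neg]
      _ ≤ 2 * Real.exp (-(a ^ 2 / 1024)) := by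
          gcongr
          nlinarith
  calc cauchyTailConst s / 2 * Real.exp (a ^ 2 / 1024)
      = cauchyTailConst s / (2 * Real.exp (-(a ^ 2 / 1024))) := by
        rw [Real.exp_neg]
        field
    _ ≤ cauchyTailConst s / (x ^ 2 * ((1 + a / 2) * Real.exp (-(a * x / 64)))) := by
        have h_nonneg := cauchyTailConst_nonneg (s := s)
        gcongr
    _ ≤ marginalRatio a s x :=
        cauchyTailConst_div_le_marginalRatio (by linarith) hx_one
          (gaussConv_laplaceDensity_le_mul_exp_neg (by linarith) hx)

lemma exists_eventually_mul_div_log_le_marginalRatio_sub_one (hs : s ≠ 0) :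
    ∃ c > 0, ∀ᶠ y : ℝ in atTop, ∀ a x : ℝ, √(2 * Real.log y) ≤ x → x ≤ a / 2 →
      c * y / Real.log y ≤ marginalRatio a s x - 1 := by
  have hK := cauchyTailConst_pos hs
  refine ⟨cauchyTailConst s / 4, by positivity, ?_⟩
  filter_upwards [eventually_ge_atTop (Real.exp 1),
    Real.isLittleO_log_id_atTop.bound (by positivity : 0 < cauchyTailConst s / 4)]
    with y hy h_log_le a x hyx hxa
  have hy_pos : 0 < y := (Real.exp_pos 1).trans_le hy
  have h_log : 1 ≤ Real.log y := (Real.le_log_iff_exp_le hy_pos).2 hy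
  have h_one : 1 ≤ cauchyTailConst s / 4 * y / Real.log y := by
    rw [one_le_div₀ (by linarith)]
    simpa [abs_of_pos hy_pos] using (le_abs_self _).trans h_log_le
  have h_ratio := mul_div_log_le_marginalRatio (s := s) hy hyx hxa
  have h_split : cauchyTailConst s / 2 * (y / Real.log y) =
      2 * (cauchyTailConst s / 4 * y / Real.log y) := by ring
  linarith

lemma eventually_exp_sq_le_marginalRatio_sub_one (hs : s ≠ 0) :
    ∀ᶠ a : ℝ in atTop, ∀ x : ℝ, a / 8 ≤ x →
      Real.exp (a ^ 2 / 2048) ≤ marginalRatio a s x - 1 := by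
  have hK := cauchyTailConst_pos hs
  have h_exp : Tendsto (fun a : ℝ => Real.exp (a ^ 2 / 2048)) atTop atTop :=
    Real.tendsto_exp_atTop.comp ((tendsto_pow_atTop two_ne_zero).atTop_div_const (by norm_num))
  filter_upwards [eventually_ge_atTop 640,
    h_exp.eventually (eventually_ge_atTop (4 / cauchyTailConst s))] with a ha h_large x hx
  have h_ratio := mul_exp_sq_le_marginalRatio (s := s) ha hx
  have h_one : 1 ≤ Real.exp (a ^ 2 / 2048) := Real.one_le_exp (by positivity)
  have h_square : Real.exp (a ^ 2 / 1024) = Real.exp (a ^ 2 / 2048) * Real.exp (a ^ 2 / 2048) := by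
    rw [← Real.exp_add]
    ring_nf
  rw [div_le_iff₀ hK] at h_large
  rw [h_square] at h_ratio
  nlinarith

end MarginalRatio

section SpikeAndSlab

lemma gamma1_eq_cauchyPDFReal : gamma1 = cauchyPDFReal 0 20 := by
  ext x
  simp only [gamma1, lam1, cauchyPDFReal_def', NNReal.coe_inv, NNReal.coe_ofNat, sub_zero]
  ring_nf

lemma g1_div_g0_eq_marginalRatio (n : ℕ) (x : ℝ) :
    g1 x / g0 n x = marginalRatio (lam0 n) 20 x := by
  rw [marginalRatio, ← gamma1_eq_cauchyPDFReal]
  rfl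

lemma gamma1_le_one (x : ℝ) : gamma1 x ≤ 1 := by
  rw [gamma1_eq_cauchyPDFReal]
  refine (cauchyPDFReal_zero_le 20 x).trans (inv_le_one_of_one_le₀ ?_)
  rw [NNReal.coe_ofNat]
  linarith [Real.pi_gt_three]

lemma ten_mul_le_lam0 (n : ℕ) : 10 * n ≤ lam0 n := by
  rw [lam0]
  gcongr
  linarith [two_le_sqrt_two_mul_pi]

lemma lam0_sq (n : ℕ) : lam0 n ^ 2 = 50 * π * n ^ 2 := by
  rw [lam0, mul_pow, mul_pow, Real.sq_sqrt (by positivity)]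
  ring

lemma tendsto_lam0_atTop : Tendsto lam0 atTop atTop :=
  tendsto_natCast_atTop_atTop.const_mul_atTop (by positivity)

lemma betaSSL_eq_marginalRatio_sub_one (n : ℕ) (x : ℝ) :
    betaSSL n x = marginalRatio (lam0 n) 20 x - 1 := by
  rw [betaSSL, g1_div_g0_eq_marginalRatio]

lemma g1_div_g0_lt_quarter {n : ℕ} (hn : 1 ≤ n) {x : ℝ} (hx : x ∈ Icc 0 1) :
    g1 x / g0 n x < 0.25 := by
  have hn_real : (1 : ℝ) ≤ n := mod_cast hn
  rw [g1_div_g0_eq_marginalRatio]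
  exact marginalRatio_lt_quarter (by linarith [ten_mul_le_lam0 n]) le_rfl hx

lemma exists_eventually_mul_div_log_le_betaSSL :
    ∃ c > 0, ∀ᶠ n : ℕ in atTop, ∀ x : ℝ, √(2 * Real.log n) ≤ x → x ≤ lam0 n / 2 →
      c * n / Real.log n ≤ betaSSL n x := by
  obtain ⟨c, hc, h⟩ :=
    exists_eventually_mul_div_log_le_marginalRatio_sub_one (s := 20) (by norm_num)
  refine ⟨c, hc, (tendsto_natCast_atTop_atTop.eventually h).mono fun n hn x => ?_⟩
  rw [betaSSL_eq_marginalRatio_sub_one]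
  exact hn (lam0 n) x

lemma eventually_exp_sq_le_betaSSL :
    ∀ᶠ n : ℕ in atTop, ∀ x : ℝ, lam0 n / 8 ≤ x →
      Real.exp (25 * π / 1024 * n ^ 2) ≤ betaSSL n x := by
  have h := eventually_exp_sq_le_marginalRatio_sub_one (s := 20) (by norm_num)
  refine (tendsto_lam0_atTop.eventually h).mono fun n hn x hx => ?_
  have h_exponent : 25 * π / 1024 * n ^ 2 = lam0 n ^ 2 / 2048 := by
    rw [lam0_sq]
    ring
  rw [betaSSL_eq_marginalRatio_sub_one, h_exponent]
  exact hn x hx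

end SpikeAndSlab

/-- Lemma: behaviour of `β` for the SSL prior.  With
`λ₁ = 0.05`, for `n` large enough there exist `c, C > 0` with:
`(g₁/g₀)(2λ₁) < 0.25`; `β < 0` on `[0, 2λ₁]`; `β(x) ≥ c n / log n` for
`√(2 log n) ≤ x ≤ λ₀/2`; and `β(x) ≥ c e^{C n²} γ₁(n)/n` for `x ≥ λ₀/8`. -/
theorem betaSSL_outside_bounds :
    ∃ c > (0 : ℝ), ∃ C > (0 : ℝ), ∃ N0 : ℕ, ∀ n : ℕ, N0 ≤ n →
      g1 (2 * lam1) / g0 n (2 * lam1) < 0.25 ∧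
      (∀ x ∈ Set.Icc (0 : ℝ) (2 * lam1), betaSSL n x < 0) ∧
      (∀ x : ℝ, Real.sqrt (2 * Real.log n) ≤ x → x ≤ lam0 n / 2 →
        c * n / Real.log n ≤ betaSSL n x) ∧
      (∀ x : ℝ, lam0 n / 8 ≤ x →
        c * Real.exp (C * n ^ 2) * gamma1 n / n ≤ betaSSL n x) := by
  obtain ⟨c, hc, h_middle⟩ := exists_eventually_mul_div_log_le_betaSSL
  obtain ⟨N, hN⟩ := eventually_atTop.1
    (h_middle.and (eventually_exp_sq_le_betaSSL.and ((eventually_ge_atTop 1).and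
      (tendsto_natCast_atTop_atTop.eventually (eventually_ge_atTop c)))))
  refine ⟨c, hc, 25 * π / 1024, by positivity, N, fun n hn => ?_⟩
  obtain ⟨h_middle, h_far, hn_one, hcn⟩ := hN n hn
  have h_near (x : ℝ) (hx : x ∈ Icc 0 (2 * lam1)) : g1 x / g0 n x < 0.25 :=
    g1_div_g0_lt_quarter hn_one (Icc_subset_Icc_right (by norm_num [lam1]) hx)
  have h_coeff : c * gamma1 n / n ≤ 1 :=
    div_le_one_of_le₀ ((mul_le_of_le_one_right hc.le (gamma1_le_one n)).trans hcn) n.cast_nonneg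
  refine ⟨h_near _ ⟨by norm_num [lam1], le_rfl⟩, fun x hx => ?_, h_middle, fun x hx => ?_⟩
  · rw [betaSSL]
    linarith [h_near x hx]
  · calc c * Real.exp (25 * π / 1024 * n ^ 2) * gamma1 n / n
        = c * gamma1 n / n * Real.exp (25 * π / 1024 * n ^ 2) := by ring
      _ ≤ Real.exp (25 * π / 1024 * n ^ 2) := mul_le_of_le_one_left (Real.exp_pos _).le h_coeff
      _ ≤ betaSSL n x := h_far x hx

end
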